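/- For every n ≥ 1 and 0 ≤ i ≤ n−1, the assignments below extend to well-defined group homomorphisms s_i : VP_n → VP_{n+1} and d_i : VP_n → VP_{n−1} (where VP_1 is the trivial group), and with these maps the sequence of groups VAP_* with VAP_n = VP_{n+1} is a simplicial group, i.e. the simplicial identities d_i d_j = d_{j−1} d_i (i<j), s_i s_j = s_{j+1} s_i (i≤j), d_i s_j = s_{j−1} d_i (i<j), d_j s_j = id = d_{j+1} s_j, d_i s_j = s_j d_{i−1} (i>j+1) hold. On generators, for 1 ≤ k < l ≤ n: s_i(λ_{k,l}) = λ_{k+1,l+1} if i<k−1, λ_{k,l+1}λ_{k+1,l+1} if i=k−1, λ_{k,l+1} if k−1<i<l−1, λ_{k,l+1}λ_{k,l} if i=l−1, λ_{k,l} if i>l−1; s_i(λ_{l,k}) = λ_{l+1,k+1} if i<k−1, λ_{l+1,k+1}λ_{l+1,k} if i=k−1, λ_{l+1,k} if k−1<i<l−1, λ_{l,k}λ_{l+1,k} if i=l−1, λ_{l,k} if i>l−1; d_i(λ_{k,l}) = λ_{k−1,l−1} if i<k−1, 1 if i=k−1, λ_{k,l−1} if k−1<i<l−1, 1 if i=l−1,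 λ_{k,l} if i>l−1; d_i(λ_{l,k}) = λ_{l−1,k−1} if i<k−1, 1 if i=k−1, λ_{l−1,k} if k−1<i<l−1, 1 if i=l−1, λ_{l,k} if i>l−1. -/

import Mathlib

/-!
All the maps become transparent once the order of `k` and `l` is forgotten: `s_i` doubles strand
`i` into `i, i + 1` by `λ_{i,x} ↦ λ_{i,x} λ_{i+1,x}` and `λ_{x,i} ↦ λ_{x,i+1} λ_{x,i}`, relabelling
the other strands, while `d_i` kills every generator involving `i` and relabels the rest.

The relation `λ_{k,i}λ_{k,j}λ_{i,j} = λ_{i,j}λ_{k,j}λ_{k,i}` is a Yang-Baxter equation, and doubling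
one of its three strands gives a consequence of two Yang-Baxter equations and of the commutation of
generators on disjoint strands (`yb_double_first`, `yb_double_second`, `yb_double_third`). Hence
`s_i` is well defined; for `d_i` this is immediate. The simplicial identities are checked on
generators. They follow by comparing the two relabellings, except that `s_i s_j = s_{j+1} s_i` on a
generator whose two strands are both doubled needs one commutation.

Generators are indexed by natural numbers, with value `1` when an index is out of range (`gn`). The
defining relations then hold for arbitrary distinct natural numbers, so no range conditions have to
be carried along.
-/

namespace Paper

/-- Generators `λ_{i,j}`, `1 ≤ i ≠ j ≤ n` (here `0`-indexed: `i j : Fin n`, `i ≠ j`). -/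
abbrev VPGen (n : ℕ) := {p : Fin n × Fin n // p.1 ≠ p.2}

/-- The generator `λ_{i,j}` as an element of the free group (junk value `1` if `i = j`). -/
def flam {n : ℕ} (i j : Fin n) : FreeGroup (VPGen n) :=
  if h : i ≠ j then FreeGroup.of ⟨(i, j), h⟩ else 1

/-- The defining relations of the virtual pure braid group `VP_n`:
`λ_{i,j}λ_{k,l} = λ_{k,l}λ_{i,j}` and `λ_{k,i}λ_{k,j}λ_{i,j} = λ_{i,j}λ_{k,j}λ_{k,i}`,
where distinct letters stand for distinct indices. -/
def VPRels (n : ℕ) : Set (FreeGroup (VPGen n)) :=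
  {r | (∃ i j k l : Fin n, i ≠ j ∧ k ≠ l ∧ i ≠ k ∧ i ≠ l ∧ j ≠ k ∧ j ≠ l ∧
          r = flam i j * flam k l * (flam k l * flam i j)⁻¹) ∨
       (∃ i j k : Fin n, i ≠ j ∧ k ≠ i ∧ k ≠ j ∧
          r = flam k i * flam k j * flam i j * (flam i j * flam k j * flam k i)⁻¹)}

/-- The virtual pure braid group `VP_n`, given by its presentation. -/
abbrev VP (n : ℕ) := PresentedGroup (VPRels n)

/-- The generator `λ_{i,j}` as an element of `VP_n` (junk value `1` if `i = j`). -/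
def glam {n : ℕ} (i j : Fin n) : VP n :=
  if h : i ≠ j then PresentedGroup.of ⟨(i, j), h⟩ else 1

/-- Conjugation `a^b = b⁻¹ * a * b`. -/
def cj {G : Type*} [Group G] (a b : G) : G := b⁻¹ * a * b

/-- Commutator `[a, b] = a⁻¹ * b⁻¹ * a * b`. -/
def cm {G : Type*} [Group G] (a b : G) : G := a⁻¹ * b⁻¹ * a * b

/-- The defining formulas for the degeneracy homomorphisms `s_i : VP_n → VP_{n+1}`
(doubling the `(i+1)`-st strand), `0 ≤ i ≤ n-1`; here indices are `0`-based, so the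
generator `λ_{k,l}` of the paper (with `1 ≤ k < l ≤ n`) is `glam k l` with
`k < l` in `Fin n`. -/
def IsDegen (S : ∀ n, ℕ → (VP n →* VP (n + 1))) : Prop :=
  ∀ (n i : ℕ), i < n → ∀ k l : Fin n, k < l →
    ((i < k.val → S n i (glam k l) = glam k.succ l.succ) ∧
     (i = k.val → S n i (glam k l) = glam k.castSucc l.succ * glam k.succ l.succ) ∧
     (k.val < i → i < l.val → S n i (glam k l) = glam k.castSucc l.succ) ∧
     (i = l.val → S n i (glam k l) = glam k.castSucc l.succ * glam k.castSucc l.castSucc) ∧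
     (l.val < i → S n i (glam k l) = glam k.castSucc l.castSucc)) ∧
    ((i < k.val → S n i (glam l k) = glam l.succ k.succ) ∧
     (i = k.val → S n i (glam l k) = glam l.succ k.succ * glam l.succ k.castSucc) ∧
     (k.val < i → i < l.val → S n i (glam l k) = glam l.succ k.castSucc) ∧
     (i = l.val → S n i (glam l k) = glam l.castSucc k.castSucc * glam l.succ k.castSucc) ∧
     (l.val < i → S n i (glam l k) = glam l.castSucc k.castSucc))

/-- The defining formulas for the face homomorphisms `d_i : VP_{n+1} → VP_n`
(deleting the `(i+1)`-st strand), `0 ≤ i ≤ n`; `0`-based indices as in `IsDegen`. -/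
def IsFace (D : ∀ n, ℕ → (VP (n + 1) →* VP n)) : Prop :=
  ∀ (n i : ℕ), i ≤ n →
    (∀ k l : Fin (n + 1), k < l →
      ((i = k.val → D n i (glam k l) = 1) ∧ (i = l.val → D n i (glam k l) = 1) ∧
       (i = k.val → D n i (glam l k) = 1) ∧ (i = l.val → D n i (glam l k) = 1))) ∧
    (∀ k l : Fin n, k < l →
      ((i ≤ k.val →
          D n i (glam k.succ l.succ) = glam k l ∧ D n i (glam l.succ k.succ) = glam l k) ∧
       (k.val < i → i ≤ l.val →
          D n i (glam k.castSucc l.succ) = glam k l ∧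
          D n i (glam l.succ k.castSucc) = glam l k) ∧
       (l.val < i →
          D n i (glam k.castSucc l.castSucc) = glam k l ∧
          D n i (glam l.castSucc k.castSucc) = glam l k)))

/-! ### Generators indexed by natural numbers -/

/-- The generator `λ_{a,b}` of `VP_n` for natural numbers `a`, `b` (`0`-based), with value `1` if
`a = b` or if an index is out of range. -/
def gn (n a b : ℕ) : VP n :=
  if h : a < n ∧ b < n then glam ⟨a, h.1⟩ ⟨b, h.2⟩ else 1

lemma glam_eq_gn {n : ℕ} (a b : Fin n) : glam a b = gn n a b := by
  simp [gn]

lemma gn_self (n a : ℕ) : gn n a a = 1 := by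
  simp [gn, glam]

lemma gn_out_left {n a : ℕ} (b : ℕ) (h : n ≤ a) : gn n a b = 1 := by
  rw [gn, dif_neg (by omega)]

lemma gn_out_right {n b : ℕ} (a : ℕ) (h : n ≤ b) : gn n a b = 1 := by
  rw [gn, dif_neg (by omega)]

lemma mk_flam {n : ℕ} (i j : Fin n) : PresentedGroup.mk (VPRels n) (flam i j) = glam i j := by
  unfold flam glam
  split_ifs
  · rfl
  · simp

lemma gn_comm (n : ℕ) {a b c d : ℕ} (hac : a ≠ c) (had : a ≠ d) (hbc : b ≠ c) (hbd : b ≠ d) :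
    Commute (gn n a b) (gn n c d) := by
  by_cases hab : a = b
  · subst hab; rw [gn_self]; exact Commute.one_left _
  by_cases hcd : c = d
  · subst hcd; rw [gn_self]; exact Commute.one_right _
  by_cases h₁ : a < n ∧ b < n
  swap
  · rw [gn, dif_neg h₁]; exact Commute.one_left _
  by_cases h₂ : c < n ∧ d < n
  swap
  · rw [gn.eq_1 n c d, dif_neg h₂]; exact Commute.one_right _
  rw [gn, gn, dif_pos h₁, dif_pos h₂, ← mk_flam, ← mk_flam]
  have := PresentedGroup.mk_eq_one_iff.2 (Subgroup.subset_normalClosure (s := VPRels n)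
    (Or.inl ⟨⟨a, h₁.1⟩, ⟨b, h₁.2⟩, ⟨c, h₂.1⟩, ⟨d, h₂.2⟩, by simpa using hab, by simpa using hcd,
      by simpa using hac, by simpa using had, by simpa using hbc, by simpa using hbd, rfl⟩))
  simpa only [map_mul, map_inv, mul_inv_eq_one, commute_iff_eq] using this

/-- The Yang-Baxter relation, on strands `k`, `i`, `j` in this order. -/
lemma gn_yb (n : ℕ) {k i j : ℕ} (hij : i ≠ j) (hki : k ≠ i) (hkj : k ≠ j) :
    gn n k i * gn n k j * gn n i j = gn n i j * gn n k j * gn n k i := by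
  by_cases hk : k < n
  swap
  · simp [gn_out_left _ (not_lt.1 hk)]
  by_cases hi : i < n
  swap
  · simp [gn_out_left _ (not_lt.1 hi), gn_out_right _ (not_lt.1 hi)]
  by_cases hj : j < n
  swap
  · simp [gn_out_right _ (not_lt.1 hj)]
  rw [gn, gn, gn, dif_pos ⟨hk, hi⟩, dif_pos ⟨hk, hj⟩, dif_pos ⟨hi, hj⟩,
    ← mk_flam, ← mk_flam, ← mk_flam]
  have := PresentedGroup.mk_eq_one_iff.2 (Subgroup.subset_normalClosure (s := VPRels n)
    (Or.inr ⟨⟨i, hi⟩, ⟨j, hj⟩, ⟨k, hk⟩, by simpa using hij, by simpa using hki,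
      by simpa using hkj, rfl⟩))
  simpa only [map_mul, map_inv, mul_inv_eq_one] using this

/-- The universal property of `VP_n` in terms of natural-number indices. -/
lemma exists_hom {G : Type*} [Group G] (n : ℕ) (f : ℕ → ℕ → G)
    (hc : ∀ a b c d : ℕ, a ≠ b → c ≠ d → a ≠ c → a ≠ d → b ≠ c → b ≠ d →
      Commute (f a b) (f c d))
    (hy : ∀ k i j : ℕ, i ≠ j → k ≠ i → k ≠ j →
      f k i * f k j * f i j = f i j * f k j * f k i) :
    ∃ φ : VP n →* G, ∀ a b : ℕ, a < n → b < n → a ≠ b → φ (gn n a b) = f a b := by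
  have hl : ∀ i j : Fin n, i ≠ j →
      FreeGroup.lift (fun p : VPGen n => f p.1.1 p.1.2) (flam i j) = f i j := by
    intro i j h
    simp [flam, h]
  have hr : ∀ r ∈ VPRels n, FreeGroup.lift (fun p : VPGen n => f p.1.1 p.1.2) r = 1 := by
    rintro r (⟨i, j, k, l, h1, h2, h3, h4, h5, h6, rfl⟩ | ⟨i, j, k, h1, h2, h3, rfl⟩)
    · simp only [map_mul, map_inv, mul_inv_eq_one, hl i j h1, hl k l h2]
      exact hc _ _ _ _ (Fin.val_ne_of_ne h1) (Fin.val_ne_of_ne h2) (Fin.val_ne_of_ne h3)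
        (Fin.val_ne_of_ne h4) (Fin.val_ne_of_ne h5) (Fin.val_ne_of_ne h6)
    · simp only [map_mul, map_inv, mul_inv_eq_one, hl i j h1, hl k i h2, hl k j h3]
      exact hy _ _ _ (Fin.val_ne_of_ne h1) (Fin.val_ne_of_ne h2) (Fin.val_ne_of_ne h3)
  refine ⟨PresentedGroup.toGroup hr, fun a b ha hb hab => ?_⟩
  have : gn n a b = PresentedGroup.of ⟨(⟨a, ha⟩, ⟨b, hb⟩), by simpa using hab⟩ := by
    simp [gn, glam, ha, hb, hab]
  rw [this, PresentedGroup.toGroup.of]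

lemma hom_ext {G : Type*} [Group G] {n : ℕ} {φ ψ : VP n →* G}
    (h : ∀ a b : ℕ, a < n → b < n → a ≠ b → φ (gn n a b) = ψ (gn n a b)) : φ = ψ := by
  apply PresentedGroup.ext
  rintro ⟨⟨a, b⟩, hab⟩
  have := h a b a.2 b.2 (Fin.val_ne_of_ne hab)
  rw [← glam_eq_gn] at this
  simpa [glam, show a ≠ b from hab] using this

/-! ### Doubling a strand in the Yang-Baxter equation -/

section YangBaxter

variable {G : Type*} [Group G]

/-- Doubling the strand `k` into `k, k'`: here `a = λ_{k,i}`, `b = λ_{k,j}`, `c = λ_{i,j}`, and the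
primed elements have `k'` in place of `k`. -/
lemma yb_double_first {a a' b b' c : G} (h : a * b * c = c * b * a)
    (h' : a' * b' * c = c * b' * a') (h₁ : Commute a' b) (h₂ : Commute a b') :
    a * a' * (b * b') * c = c * (b * b') * (a * a') := by
  calc a * a' * (b * b') * c = a * (a' * b) * b' * c := by group
    _ = a * b * (a' * b' * c) := by rw [h₁.eq]; group
    _ = a * b * c * b' * a' := by rw [h']; group
    _ = c * b * (a * b') * a' := by rw [h]; group
    _ = c * (b * b') * (a * a') := by rw [h₂.eq]; group

/-- Doubling the strand `i` into `i, i'`, with `a = λ_{k,i}`, `b = λ_{k,j}`, `c = λ_{i,j}`. -/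
lemma yb_double_second {a a' b c c' : G} (h : a * b * c = c * b * a)
    (h' : a' * b * c' = c' * b * a') (h₁ : Commute a' c) (h₂ : Commute a c') :
    a' * a * b * (c * c') = c * c' * b * (a' * a) := by
  calc a' * a * b * (c * c') = a' * (a * b * c) * c' := by group
    _ = (a' * c) * b * (a * c') := by rw [h]; group
    _ = c * (a' * b * c') * a := by rw [h₁.eq, h₂.eq]; group
    _ = c * c' * b * (a' * a) := by rw [h']; group

/-- Doubling the strand `j` into `j, j'`, with `a = λ_{k,i}`, `b = λ_{k,j}`, `c = λ_{i,j}`. -/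
lemma yb_double_third {a b b' c c' : G} (h : a * b * c = c * b * a)
    (h' : a * b' * c' = c' * b' * a) (h₁ : Commute b c') (h₂ : Commute b' c) :
    a * (b' * b) * (c' * c) = c' * c * (b' * b) * a := by
  calc a * (b' * b) * (c' * c) = a * b' * (b * c') * c := by group
    _ = (a * b' * c') * b * c := by rw [h₁.eq]; group
    _ = c' * b' * (a * b * c) := by rw [h']; group
    _ = c' * (b' * c) * b * a := by rw [h]; group
    _ = c' * c * (b' * b) * a := by rw [h₂.eq]; group

end YangBaxter

/-! ### The degeneracy and face homomorphisms -/

/-- Relabelling of the strands `c ≠ i` when strand `i` is doubled. -/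
def up (i c : ℕ) : ℕ := if c < i then c else c + 1

/-- Relabelling of the strands `c ≠ i` when strand `i` is deleted. -/
def dn (i c : ℕ) : ℕ := if c < i then c else c - 1

lemma up_ne {i c : ℕ} (h : c ≠ i) : up i c ≠ i := by unfold up; split_ifs <;> omega

lemma up_ne_succ {i c : ℕ} (h : c ≠ i) : up i c ≠ i + 1 := by unfold up; split_ifs <;> omega

lemma up_ne_up {i c d : ℕ} (h : c ≠ d) : up i c ≠ up i d := by
  unfold up; split_ifs <;> omega

lemma dn_ne_dn {i c d : ℕ} (hc : c ≠ i) (hd : d ≠ i) (h : c ≠ d) : dn i c ≠ dn i d := by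
  unfold dn; split_ifs <;> omega

/-- The image of `λ_{a,b}` under `s_i`, for `a ≠ b`. -/
def sval (n i a b : ℕ) : VP (n + 1) :=
  if a = i then gn (n + 1) i (up i b) * gn (n + 1) (i + 1) (up i b)
  else if b = i then gn (n + 1) (up i a) (i + 1) * gn (n + 1) (up i a) i
  else gn (n + 1) (up i a) (up i b)

/-- The image of `λ_{a,b}` under `d_i`, for `a ≠ b`. -/
def dval (n i a b : ℕ) : VP n :=
  if a = i ∨ b = i then 1 else gn n (dn i a) (dn i b)

lemma sval_comm (n i a b c d : ℕ) (_ : a ≠ b) (_ : c ≠ d) (hac : a ≠ c) (had : a ≠ d)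
    (hbc : b ≠ c) (hbd : b ≠ d) : Commute (sval n i a b) (sval n i c d) := by
  have key : ∀ {p q r s : ℕ}, p ≠ r → p ≠ s → q ≠ r → q ≠ s →
    Commute (gn (n + 1) p q) (gn (n + 1) r s) := fun h1 h2 h3 h4 => gn_comm _ h1 h2 h3 h4
  have e1 := @up_ne i
  have e2 := @up_ne_succ i
  have e3 := @up_ne_up i
  unfold sval
  split_ifs <;>
  first
  | omega
  | (repeat' first | apply Commute.mul_left | apply Commute.mul_right
     all_goals apply key <;>
       first
       | exact e3 (by omega)
       | exact e1 (by omega)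
       | exact e2 (by omega)
       | exact (e1 (by omega)).symm
       | exact (e2 (by omega)).symm)

lemma sval_yb (n t k i j : ℕ) (hij : i ≠ j) (hki : k ≠ i) (hkj : k ≠ j) :
    sval n t k i * sval n t k j * sval n t i j = sval n t i j * sval n t k j * sval n t k i := by
  have e0 : t ≠ t + 1 := by omega
  have u {c : ℕ} (h : c ≠ t) : t ≠ up t c := (up_ne h).symm
  have u' {c : ℕ} (h : c ≠ t) : t + 1 ≠ up t c := (up_ne_succ h).symm
  by_cases h1 : k = t
  · subst h1
    simp only [sval, if_true, if_neg hki.symm, if_neg hkj.symm]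
    have w := up_ne_up (i := k) hij
    exact yb_double_first (gn_yb _ w (u hki.symm) (u hkj.symm))
      (gn_yb _ w (u' hki.symm) (u' hkj.symm))
      (gn_comm _ e0.symm (u' hkj.symm) (u hki.symm).symm w)
      (gn_comm _ e0 (u hkj.symm) (u' hki.symm).symm w)
  by_cases h2 : i = t
  · subst h2
    simp only [sval, if_true, if_neg hki, if_neg hij.symm]
    have w := up_ne_up (i := i) hkj
    exact yb_double_second (gn_yb _ (u hij.symm) (u hki).symm w)
      (gn_yb _ (u' hij.symm) (u' hki).symm w)
      (gn_comm _ (u hki).symm w e0.symm (u' hij.symm))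
      (gn_comm _ (u' hki).symm w e0 (u hij.symm))
  by_cases h3 : j = t
  · subst h3
    simp only [sval, if_true, if_neg hkj, if_neg hij]
    have w := up_ne_up (i := j) hki
    exact yb_double_third (gn_yb _ (u hij).symm w (u hkj).symm)
      (gn_yb _ (u' hij).symm w (u' hkj).symm)
      (gn_comm _ w (u' hkj).symm (u hij) e0)
      (gn_comm _ w (u hkj).symm (u' hij) e0.symm)
  · simp only [sval, if_neg h1, if_neg h2, if_neg h3]
    exact gn_yb _ (up_ne_up hij) (up_ne_up hki) (up_ne_up hkj)

lemma dval_comm (n i a b c d : ℕ) (hac : a ≠ c) (had : a ≠ d)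
    (hbc : b ≠ c) (hbd : b ≠ d) : Commute (dval n i a b) (dval n i c d) := by
  unfold dval
  split_ifs with h1 h2 h2
  · exact Commute.one_left _
  · exact Commute.one_left _
  · exact Commute.one_right _
  · push Not at h1 h2
    exact gn_comm _ (dn_ne_dn h1.1 h2.1 hac) (dn_ne_dn h1.1 h2.2 had)
      (dn_ne_dn h1.2 h2.1 hbc) (dn_ne_dn h1.2 h2.2 hbd)

lemma dval_yb (n t k i j : ℕ) (hij : i ≠ j) (hki : k ≠ i) (hkj : k ≠ j) :
    dval n t k i * dval n t k j * dval n t i j = dval n t i j * dval n t k j * dval n t k i := by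
  by_cases h1 : k = t
  · simp [dval, h1]
  by_cases h2 : i = t
  · simp [dval, h2]
  by_cases h3 : j = t
  · simp [dval, h3]
  simp only [dval, h1, h2, h3, or_self, if_false]
  exact gn_yb _ (dn_ne_dn h2 h3 hij) (dn_ne_dn h1 h2 hki) (dn_ne_dn h1 h3 hkj)

/-- The degeneracy homomorphism `s_i : VP_n → VP_{n+1}`. -/
noncomputable def degen (n i : ℕ) : VP n →* VP (n + 1) :=
  (exists_hom n (sval n i) (sval_comm n i) (sval_yb n i)).choose

/-- The face homomorphism `d_i : VP_{n+1} → VP_n`. -/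
noncomputable def face (n i : ℕ) : VP (n + 1) →* VP n :=
  (exists_hom (n + 1) (dval n i) (fun a b c d _ _ => dval_comm n i a b c d)
    (dval_yb n i)).choose

/-- The formula for `s_i` holds for all distinct indices, because out-of-range generators are sent
to out-of-range generators; this uses `i < n`. -/
lemma degen_gn {n i a b : ℕ} (hi : i < n) (hab : a ≠ b) :
    degen n i (gn n a b) = sval n i a b := by
  by_cases ha : a < n
  swap
  · have : n + 1 ≤ up i a := by unfold up; split_ifs <;> omega
    rw [gn_out_left _ (not_lt.1 ha), map_one, sval, if_neg (by omega)]
    simp [gn_out_left _ this]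
  by_cases hb : b < n
  swap
  · have : n + 1 ≤ up i b := by unfold up; split_ifs <;> omega
    rw [gn_out_right _ (not_lt.1 hb), map_one, sval, if_neg (show ¬ b = i by omega)]
    simp [gn_out_right _ this]
  exact (exists_hom n (sval n i) (sval_comm n i) (sval_yb n i)).choose_spec a b ha hb hab

/-- The formula for `d_i` holds for all indices. -/
lemma face_gn {n i : ℕ} (a b : ℕ) (hi : i ≤ n) :
    face n i (gn (n + 1) a b) = dval n i a b := by
  by_cases hab : a = b
  · subst hab; simp [dval, gn_self]
  by_cases ha : a < n + 1
  swap
  · have : n ≤ dn i a := by unfold dn; split_ifs <;> omega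
    rw [gn_out_left _ (not_lt.1 ha), map_one, dval]
    simp [gn_out_left _ this]
  by_cases hb : b < n + 1
  swap
  · have : n ≤ dn i b := by unfold dn; split_ifs <;> omega
    rw [gn_out_right _ (not_lt.1 hb), map_one, dval]
    simp [gn_out_right _ this]
  exact (exists_hom (n + 1) (dval n i) (fun a b c d _ _ => dval_comm n i a b c d)
    (dval_yb n i)).choose_spec a b ha hb hab

lemma up_of_lt {i c : ℕ} (h : c < i) : up i c = c := if_pos h

lemma up_of_gt {i c : ℕ} (h : i < c) : up i c = c + 1 := if_neg (by omega)

lemma dn_of_lt {i c : ℕ} (h : c < i) : dn i c = c := if_pos h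

lemma dn_of_gt {i c : ℕ} (h : i < c) : dn i c = c - 1 := if_neg (by omega)

lemma degen_left {n i a b : ℕ} (hi : i < n) (hab : a ≠ b) (h : a = i) :
    degen n i (gn n a b) = gn (n + 1) i (up i b) * gn (n + 1) (i + 1) (up i b) := by
  rw [degen_gn hi hab, sval, if_pos h]

lemma degen_right {n i a b : ℕ} (hi : i < n) (hab : a ≠ b) (h : b = i) :
    degen n i (gn n a b) = gn (n + 1) (up i a) (i + 1) * gn (n + 1) (up i a) i := by
  rw [degen_gn hi hab, sval, if_neg (by omega), if_pos h]

lemma degen_other {n i a b : ℕ} (hi : i < n) (hab : a ≠ b) (ha : a ≠ i) (hb : b ≠ i) :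
    degen n i (gn n a b) = gn (n + 1) (up i a) (up i b) := by
  rw [degen_gn hi hab, sval, if_neg ha, if_neg hb]

lemma face_left {n i a b : ℕ} (hi : i ≤ n) (h : a = i) : face n i (gn (n + 1) a b) = 1 := by
  rw [face_gn a b hi, dval, if_pos (Or.inl h)]

lemma face_right {n i a b : ℕ} (hi : i ≤ n) (h : b = i) : face n i (gn (n + 1) a b) = 1 := by
  rw [face_gn a b hi, dval, if_pos (Or.inr h)]

lemma face_other {n i a b : ℕ} (hi : i ≤ n) (ha : a ≠ i) (hb : b ≠ i) :
    face n i (gn (n + 1) a b) = gn n (dn i a) (dn i b) := by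
  rw [face_gn a b hi, dval, if_neg (by omega)]

lemma isDegen_degen : IsDegen degen := by
  intro n i hi k l hkl
  have hkl' : k.val < l.val := hkl
  simp only [glam_eq_gn, Fin.val_succ, Fin.val_castSucc]
  refine ⟨⟨?_, ?_, ?_, ?_, ?_⟩, ⟨?_, ?_, ?_, ?_, ?_⟩⟩ <;> intros <;>
    simp (disch := omega) only [degen_left, degen_right, degen_other, up_of_lt, up_of_gt] <;>
    simp only [*]

lemma isFace_face : IsFace face := by
  intro n i hi
  refine ⟨fun k l hkl => ?_, fun k l hkl => ?_⟩
  · have hkl' : k.val < l.val := hkl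
    simp only [glam_eq_gn]
    refine ⟨?_, ?_, ?_, ?_⟩ <;> intros <;> simp (disch := omega) only [face_left, face_right]
  · have hkl' : k.val < l.val := hkl
    simp only [glam_eq_gn, Fin.val_succ, Fin.val_castSucc]
    refine ⟨?_, ?_, ?_⟩ <;> intros <;> constructor <;>
      simp (disch := omega) only [face_other, dn_of_lt, dn_of_gt, Nat.add_sub_cancel]

/-! ### The simplicial identities -/

lemma face_face {n i j : ℕ} (hij : i < j) (hj : j ≤ n + 1) :
    (face n i).comp (face (n + 1) j) = (face n (j - 1)).comp (face (n + 1) i) := by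
  obtain ⟨j, rfl⟩ : ∃ t, j = t + 1 := ⟨j - 1, by omega⟩
  refine hom_ext fun a b _ _ _ => ?_
  simp only [MonoidHom.comp_apply, Nat.add_sub_cancel]
  rcases lt_trichotomy a i with h1 | h1 | h1 <;> rcases lt_trichotomy b i with h2 | h2 | h2 <;>
  rcases lt_trichotomy a (j + 1) with h3 | h3 | h3 <;>
  rcases lt_trichotomy b (j + 1) with h4 | h4 | h4 <;>
  first
  | omega
  | simp (disch := omega) only [face_left, face_right, face_other, dn_of_lt, dn_of_gt, map_one]

lemma degen_degen {n i j : ℕ} (hij : i ≤ j) (hj : j < n) :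
    (degen (n + 1) i).comp (degen n j) = (degen (n + 1) (j + 1)).comp (degen n i) := by
  refine hom_ext fun a b _ _ _ => ?_
  simp only [MonoidHom.comp_apply]
  rcases lt_trichotomy a i with h1 | h1 | h1 <;> rcases lt_trichotomy b i with h2 | h2 | h2 <;>
  rcases lt_trichotomy a j with h3 | h3 | h3 <;> rcases lt_trichotomy b j with h4 | h4 | h4 <;>
  first
  | omega
  | (simp (disch := omega) only [degen_left, degen_right, degen_other, up_of_lt, up_of_gt,
      map_mul]
     done)
  -- One strand is tripled.
  | (obtain rfl : i = j := by omega
     simp (disch := omega) only [degen_left, degen_right, degen_other, up_of_lt, up_of_gt,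
      map_mul, mul_assoc]
     done)
  -- Both strands are doubled, and the two middle factors are on disjoint strands.
  | (simp (disch := omega) only [degen_left, degen_right, up_of_lt, up_of_gt,
      map_mul]
     exact (gn_comm _ (by omega) (by omega) (by omega) (by omega)).mul_mul_mul_comm _ _)

lemma face_degen_of_lt {n i j : ℕ} (hij : i < j) (hj : j ≤ n) :
    (face (n + 1) i).comp (degen (n + 1) j) = (degen n (j - 1)).comp (face n i) := by
  obtain ⟨j, rfl⟩ : ∃ t, j = t + 1 := ⟨j - 1, by omega⟩
  refine hom_ext fun a b _ _ _ => ?_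
  simp only [MonoidHom.comp_apply, Nat.add_sub_cancel]
  rcases lt_trichotomy a i with h1 | h1 | h1 <;> rcases lt_trichotomy b i with h2 | h2 | h2 <;>
  rcases lt_trichotomy a (j + 1) with h3 | h3 | h3 <;>
  rcases lt_trichotomy b (j + 1) with h4 | h4 | h4 <;>
  first
  | omega
  | simp (disch := omega) only [degen_left, degen_right, degen_other, up_of_lt, up_of_gt,
      face_left, face_right, face_other, dn_of_lt, dn_of_gt, map_mul, map_one, mul_one,
      Nat.add_sub_cancel, Nat.sub_add_cancel]

lemma face_degen_self {n j : ℕ} (hj : j < n) :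
    (face n j).comp (degen n j) = MonoidHom.id (VP n) := by
  refine hom_ext fun a b _ _ _ => ?_
  simp only [MonoidHom.comp_apply, MonoidHom.id_apply]
  rcases lt_trichotomy a j with h1 | h1 | h1 <;> rcases lt_trichotomy b j with h2 | h2 | h2 <;>
  first
  | omega
  | simp (disch := omega) only [degen_left, degen_right, degen_other, up_of_lt, up_of_gt,
      face_left, face_right, face_other, dn_of_lt, dn_of_gt, map_mul, mul_one, one_mul,
      Nat.add_sub_cancel] <;> simp only [h1, h2]

lemma face_succ_degen_self {n j : ℕ} (hj : j < n) :
    (face n (j + 1)).comp (degen n j) = MonoidHom.id (VP n) := by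
  refine hom_ext fun a b _ _ _ => ?_
  simp only [MonoidHom.comp_apply, MonoidHom.id_apply]
  rcases lt_trichotomy a j with h1 | h1 | h1 <;> rcases lt_trichotomy b j with h2 | h2 | h2 <;>
  first
  | omega
  | simp (disch := omega) only [degen_left, degen_right, degen_other, up_of_lt, up_of_gt,
      face_left, face_right, face_other, dn_of_lt, dn_of_gt, map_mul, mul_one, one_mul,
      Nat.add_sub_cancel] <;> simp only [h1, h2]

lemma face_degen_of_gt {n i j : ℕ} (hij : j + 1 < i) (hi : i ≤ n + 1) :
    (face (n + 1) i).comp (degen (n + 1) j) = (degen n j).comp (face n (i - 1)) := by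
  obtain ⟨i, rfl⟩ : ∃ t, i = t + 1 := ⟨i - 1, by omega⟩
  refine hom_ext fun a b _ _ _ => ?_
  simp only [MonoidHom.comp_apply, Nat.add_sub_cancel]
  rcases lt_trichotomy a i with h1 | h1 | h1 <;> rcases lt_trichotomy b i with h2 | h2 | h2 <;>
  rcases lt_trichotomy a j with h3 | h3 | h3 <;>
  rcases lt_trichotomy b j with h4 | h4 | h4 <;>
  first
  | omega
  | simp (disch := omega) only [degen_left, degen_right, degen_other, up_of_lt, up_of_gt,
      face_left, face_right, face_other, dn_of_lt, dn_of_gt, map_mul, map_one, mul_one,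
      Nat.add_sub_cancel, Nat.sub_add_cancel]

/-- Proposition 3.1: the assignments on the generators `λ_{k,l}`, `λ_{l,k}` extend to
well-defined homomorphisms `s_i : VP_n → VP_{n+1}` and `d_i : VP_{n+1} → VP_n`, and with
these maps the sequence `VAP_*` with `VAP_n = VP_{n+1}` is a simplicial group: the
simplicial identities `d_i d_j = d_{j-1} d_i` (`i < j`), `s_i s_j = s_{j+1} s_i`
(`i ≤ j`), `d_i s_j = s_{j-1} d_i` (`i < j`), `d_j s_j = id = d_{j+1} s_j`, and
`d_i s_j = s_j d_{i-1}` (`i > j + 1`) hold. -/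
theorem statement0 :
    ∃ (S : ∀ n, ℕ → (VP n →* VP (n + 1))) (D : ∀ n, ℕ → (VP (n + 1) →* VP n)),
      IsDegen S ∧ IsFace D ∧
      (∀ (n i j : ℕ), i < j → j ≤ n + 1 →
        (D n i).comp (D (n + 1) j) = (D n (j - 1)).comp (D (n + 1) i)) ∧
      (∀ (n i j : ℕ), i ≤ j → j < n →
        (S (n + 1) i).comp (S n j) = (S (n + 1) (j + 1)).comp (S n i)) ∧
      (∀ (n i j : ℕ), i < j → j ≤ n →
        (D (n + 1) i).comp (S (n + 1) j) = (S n (j - 1)).comp (D n i)) ∧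
      (∀ (n j : ℕ), j < n →
        (D n j).comp (S n j) = MonoidHom.id (VP n) ∧
        (D n (j + 1)).comp (S n j) = MonoidHom.id (VP n)) ∧
      (∀ (n i j : ℕ), j + 1 < i → i ≤ n + 1 →
        (D (n + 1) i).comp (S (n + 1) j) = (S n j).comp (D n (i - 1))) := by
  exact ⟨degen, face, isDegen_degen, isFace_face, fun _ _ _ => face_face,
    fun _ _ _ => degen_degen, fun _ _ _ => face_degen_of_lt,
    fun _ _ hj => ⟨face_degen_self hj, face_succ_degen_self hj⟩, fun _ _ _ => face_degen_of_gt⟩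

end Paper
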